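/- Let P_{X̄Ȳ} ∈ 𝒫_n(𝒳×𝒴) be a joint type and P_{𝒯ⁿ_{X̄Ȳ}} the uniform distribution on the type class 𝒯ⁿ_{X̄Ȳ}. Let Φ_n be a Gray-Wyner code of blocklength n whose correct probability satisfies P_c(Φ_n | P_{𝒯ⁿ_{X̄Ȳ}}) ≥ 2^{−nα_n} for some α_n > 0, and let β_n > 0. Then there exists a finite alphabet 𝒲 with |𝒲| ≤ |𝒳||𝒴|+2 and a test channel P_{W̄|X̄Ȳ} ∈ 𝒫(𝒲|𝒳×𝒴) such that, with (X̄,Ȳ) ∼ P_{X̄Ȳ} and W̄ generated via P_{W̄|X̄Ȳ}: (1/n) log|ℳ0^{(n)}| ≥ I(W̄ ∧ X̄,Ȳ) − |𝒳||𝒴| log(n+1)/n − (α_n+β_n); (1/n) log|ℳ1^{(n)}| ≥ H(X̄|W̄) − 1/n − 2^{−nβ_n} log|𝒳|; and (1/n) log|ℳ2^{(n)}| ≥ H(Ȳ|W̄) − 1/n − 2^{−nβ_n} log|𝒴|. -/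

import Mathlib

/-! The source is conditioned on being decoded correctly. Let `D` be the set of words of the type class
which the code reproduces. Then `|D| ≥ 2^{-nα} |T|`, where the type class satisfies
`|T| ≥ 2^{nH(p)} / (n+1)^{|𝒳||𝒴|}` (`ent_le_log_card_typeClass`). For a uniform word of `D` there is no
decoding error, and a letter at a uniformly chosen time has law exactly `p`, because all words of `D`
have type `p`.

Take `W = (J, M₀, X^{J-1}, Y^{J-1})` with `J` a uniform time. The chain rule gives
`n H(X,Y|W) = H(Xⁿ,Yⁿ|M₀) ≥ log |D| - log |ℳ₀|` (`sum_ent_pair`, `log_card_le`), which is the bound on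
the common rate. Given `M₀`, the word `Xⁿ` is a function of the private message, whence
`n H(X|W) ≤ log |ℳ₁|`, and likewise for `Y` (`sum_ent_side`). The bounds obtained hold without the
terms in `β` and `1/n`, which are nonnegative slack.

Concretely, `W` is labelled by a pair of a time `i` and a word `f ∈ D`, with uniform weights; the
conditional law attached to `(i, f)` is the empirical law of the `i`-th letter over the class
`cl D m i f`. Repeating a conditional law over several labels does not affect any of the entropies.
Finally `exists_small_support` reduces the alphabet: `p` and the values of `H(X|W)`, `H(Y|W)` are
`|𝒳||𝒴| + 2` linear constraints on the weights, and moving along a linear relation among the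
constraint vectors in the direction which does not decrease `H(X,Y|W)` removes labels until at most
that many are left. -/

open Finset Filter MeasureTheory

attribute [local instance] Classical.propDecidable

namespace GW

noncomputable section

/-- Shannon entropy (base 2) of a distribution on a finite alphabet,
with the convention `0 * log 0 = 0`. -/
def ent {α : Type*} [Fintype α] (p : α → ℝ) : ℝ := -∑ a, p a * Real.logb 2 (p a)

/-- `p` is a probability distribution on a finite alphabet. -/
def IsProb {α : Type*} [Fintype α] (p : α → ℝ) : Prop :=
  (∀ a, 0 ≤ p a) ∧ ∑ a, p a = 1

/-- `K` is a channel (a conditional probability distribution). -/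
def IsChannel {α β : Type*} [Fintype α] [Fintype β] (K : α → β → ℝ) : Prop :=
  ∀ a, IsProb (K a)

variable {𝒳 𝒴 𝒲 : Type*} [Fintype 𝒳] [Fintype 𝒴] [Fintype 𝒲]

/-- Output distribution `P_W` on `𝒲` induced by the source `p` on `𝒳 × 𝒴`
and the test channel `K`. -/
def outW (p : 𝒳 × 𝒴 → ℝ) (K : 𝒳 × 𝒴 → 𝒲 → ℝ) (w : 𝒲) : ℝ := ∑ a, p a * K a w

/-- Joint distribution of `(W, X, Y)`. -/
def jointW (p : 𝒳 × 𝒴 → ℝ) (K : 𝒳 × 𝒴 → 𝒲 → ℝ) : 𝒲 × 𝒳 × 𝒴 → ℝ :=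
  fun z => p z.2 * K z.2 z.1

/-- Joint distribution of `(W, X)`. -/
def margWX (p : 𝒳 × 𝒴 → ℝ) (K : 𝒳 × 𝒴 → 𝒲 → ℝ) : 𝒲 × 𝒳 → ℝ :=
  fun z => ∑ y, p (z.2, y) * K (z.2, y) z.1

/-- Joint distribution of `(W, Y)`. -/
def margWY (p : 𝒳 × 𝒴 → ℝ) (K : 𝒳 × 𝒴 → 𝒲 → ℝ) : 𝒲 × 𝒴 → ℝ :=
  fun z => ∑ x, p (x, z.2) * K (x, z.2) z.1

/-- Mutual information `I(W ∧ X,Y)` (base 2). -/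
def mutInfoW (p : 𝒳 × 𝒴 → ℝ) (K : 𝒳 × 𝒴 → 𝒲 → ℝ) : ℝ :=
  ent (outW p K) + ent p - ent (jointW p K)

/-- Conditional entropy `H(X|W)`. -/
def condEntX (p : 𝒳 × 𝒴 → ℝ) (K : 𝒳 × 𝒴 → 𝒲 → ℝ) : ℝ :=
  ent (margWX p K) - ent (outW p K)

/-- Conditional entropy `H(Y|W)`. -/
def condEntY (p : 𝒳 × 𝒴 → ℝ) (K : 𝒳 × 𝒴 → 𝒲 → ℝ) : ℝ :=
  ent (margWY p K) - ent (outW p K)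

/-- Conditional distribution `P_{X|W}` induced by `p` and `K`. -/
def condXW (p : 𝒳 × 𝒴 → ℝ) (K : 𝒳 × 𝒴 → 𝒲 → ℝ) (w : 𝒲) (x : 𝒳) : ℝ :=
  margWX p K (w, x) / outW p K w

/-- Conditional distribution `P_{Y|W}` induced by `p` and `K`. -/
def condYW (p : 𝒳 × 𝒴 → ℝ) (K : 𝒳 × 𝒴 → 𝒲 → ℝ) (w : 𝒲) (y : 𝒴) : ℝ :=
  margWY p K (w, y) / outW p K w

/-- The Gray–Wyner first-order rate function
`R(r1,r2|P) = min { I(W ∧ X,Y) : |𝒲| ≤ |𝒳||𝒴|+2, H(X|W) ≤ r1, H(Y|W) ≤ r2 }`. -/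
def Rgw (p : 𝒳 × 𝒴 → ℝ) (r1 r2 : ℝ) : ℝ :=
  sInf { ρ : ℝ | ∃ k, k ≤ Fintype.card 𝒳 * Fintype.card 𝒴 + 2 ∧
    ∃ K : 𝒳 × 𝒴 → Fin k → ℝ, IsChannel K ∧
      condEntX p K ≤ r1 ∧ condEntY p K ≤ r2 ∧ ρ = mutInfoW p K }

/-- `K` is an optimal test channel achieving `R(r1,r2|p)`. -/
def IsOptChannel (p : 𝒳 × 𝒴 → ℝ) (r1 r2 : ℝ) {k : ℕ} (K : 𝒳 × 𝒴 → Fin k → ℝ) : Prop :=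
  k ≤ Fintype.card 𝒳 * Fintype.card 𝒴 + 2 ∧ IsChannel K ∧
    condEntX p K ≤ r1 ∧ condEntY p K ≤ r2 ∧ mutInfoW p K = Rgw p r1 r2

/-- The function `Λ(x,y|Q_W̄, Q_{X̂|Ŵ}, Q_{Ŷ|Ŵ}, λ1, λ2)`;
terms with a vanishing conditional probability are taken to be `0`. -/
def Lam (r1 r2 lam1 lam2 : ℝ) (QW : 𝒲 → ℝ) (QX : 𝒲 → 𝒳 → ℝ) (QY : 𝒲 → 𝒴 → ℝ)
    (x : 𝒳) (y : 𝒴) : ℝ :=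
  - Real.logb 2 (∑ w, QW w *
      (if QX w x = 0 ∨ QY w y = 0 then 0 else
        (2 : ℝ) ^ (lam1 * (r1 + Real.logb 2 (QX w x)) + lam2 * (r2 + Real.logb 2 (QY w y)))))

/-- The function
`F(P_{W|XY},P_W̄,P_{X̂|Ŵ},P_{Ŷ|Ŵ}) = D(P_{W|XY}‖P_W̄|P_XY) + λ1 E[log 1/P_{X̂|Ŵ}(X|W) - r1] + λ2 E[log 1/P_{Ŷ|Ŵ}(Y|W) - r2]`. -/
def Ffun (p : 𝒳 × 𝒴 → ℝ) (r1 r2 lam1 lam2 : ℝ) (K : 𝒳 × 𝒴 → 𝒲 → ℝ)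
    (QW : 𝒲 → ℝ) (QX : 𝒲 → 𝒳 → ℝ) (QY : 𝒲 → 𝒴 → ℝ) : ℝ :=
  (∑ a : 𝒳 × 𝒴, ∑ w, p a * K a w * Real.logb 2 (K a w / QW w))
    + lam1 * (∑ a : 𝒳 × 𝒴, ∑ w, p a * K a w * (-Real.logb 2 (QX w a.1) - r1))
    + lam2 * (∑ a : 𝒳 × 𝒴, ∑ w, p a * K a w * (-Real.logb 2 (QY w a.2) - r2))

/-- The tilted information density for the Gray–Wyner network, built from an
(optimal) test channel `K` via its induced output and conditional distributions. -/
def tiltedInfo (p : 𝒳 × 𝒴 → ℝ) (r1 r2 lam1 lam2 : ℝ) {k : ℕ}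
    (K : 𝒳 × 𝒴 → Fin k → ℝ) (x : 𝒳) (y : 𝒴) : ℝ :=
  Lam r1 r2 lam1 lam2 (outW p K) (condXW p K) (condYW p K) x y

/-- The explicit optimizing channel of Lemma 1. -/
def Kstar (r1 r2 lam1 lam2 : ℝ) (QW : 𝒲 → ℝ) (QX : 𝒲 → 𝒳 → ℝ) (QY : 𝒲 → 𝒴 → ℝ) :
    𝒳 × 𝒴 → 𝒲 → ℝ :=
  fun a w => if QX w a.1 = 0 ∨ QY w a.2 = 0 then 0 else
    QW w * (2 : ℝ) ^ (Lam r1 r2 lam1 lam2 QW QX QY a.1 a.2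
      + lam1 * (r1 + Real.logb 2 (QX w a.1)) + lam2 * (r2 + Real.logb 2 (QY w a.2)))

/-- A Gray–Wyner code of blocklength `n` with message sets of sizes `M0`, `M1`, `M2`. -/
structure GWCode (𝒳 𝒴 : Type*) (n M0 M1 M2 : ℕ) where
  enc0 : (Fin n → 𝒳 × 𝒴) → Fin M0
  enc1 : (Fin n → 𝒳 × 𝒴) → Fin M1
  enc2 : (Fin n → 𝒳 × 𝒴) → Fin M2
  dec1 : Fin M0 × Fin M1 → Fin n → 𝒳
  dec2 : Fin M0 × Fin M2 → Fin n → 𝒴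

/-- Correct decoding of the source word `f`. -/
def GWCode.correct {𝒳 𝒴 : Type*} {n M0 M1 M2 : ℕ} (C : GWCode 𝒳 𝒴 n M0 M1 M2)
    (f : Fin n → 𝒳 × 𝒴) : Prop :=
  ∀ i, C.dec1 (C.enc0 f, C.enc1 f) i = (f i).1 ∧ C.dec2 (C.enc0 f, C.enc2 f) i = (f i).2

/-- Error probability of a code under the source distribution `P` on words. -/
def PeGW {n M0 M1 M2 : ℕ} (C : GWCode 𝒳 𝒴 n M0 M1 M2) (P : (Fin n → 𝒳 × 𝒴) → ℝ) : ℝ :=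
  ∑ f ∈ Finset.univ.filter (fun f => ¬ C.correct f), P f

/-- Correct probability of a code. -/
def PcGW {n M0 M1 M2 : ℕ} (C : GWCode 𝒳 𝒴 n M0 M1 M2) (P : (Fin n → 𝒳 × 𝒴) → ℝ) : ℝ :=
  1 - PeGW C P

/-- The i.i.d. (product) distribution on length-`n` source words. -/
def prodDist (p : 𝒳 × 𝒴 → ℝ) (n : ℕ) : (Fin n → 𝒳 × 𝒴) → ℝ := fun f => ∏ i, p (f i)

/-- First-order achievability of a rate triple for the Gray–Wyner network. -/
def GWAchievable (p : 𝒳 × 𝒴 → ℝ) (r0 r1 r2 : ℝ) : Prop :=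
  ∃ (M0 M1 M2 : ℕ → ℕ) (C : (n : ℕ) → GWCode 𝒳 𝒴 n (M0 n) (M1 n) (M2 n)),
    limsup (fun n : ℕ => Real.logb 2 (M0 n) / n) atTop ≤ r0 ∧
    limsup (fun n : ℕ => Real.logb 2 (M1 n) / n) atTop ≤ r1 ∧
    limsup (fun n : ℕ => Real.logb 2 (M2 n) / n) atTop ≤ r2 ∧
    Tendsto (fun n : ℕ => PeGW (C n) (prodDist p n)) atTop (nhds 0)

/-- Second-order `(ε, r0*, r1*, r2*)`-achievability of `(L0, L1, L2)`. -/
def GWSecondAchievable (p : 𝒳 × 𝒴 → ℝ) (ε r0 r1 r2 L0 L1 L2 : ℝ) : Prop :=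
  ∃ (M0 M1 M2 : ℕ → ℕ) (C : (n : ℕ) → GWCode 𝒳 𝒴 n (M0 n) (M1 n) (M2 n)),
    limsup (fun n : ℕ => (Real.logb 2 (M0 n) - n * r0) / Real.sqrt n) atTop ≤ L0 ∧
    limsup (fun n : ℕ => (Real.logb 2 (M1 n) - n * r1) / Real.sqrt n) atTop ≤ L1 ∧
    limsup (fun n : ℕ => (Real.logb 2 (M2 n) - n * r2) / Real.sqrt n) atTop ≤ L2 ∧
    limsup (fun n : ℕ => PeGW (C n) (prodDist p n)) atTop ≤ ε

/-- Empirical distribution (type) of a sequence. -/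
def empDist {α : Type*} [Fintype α] {n : ℕ} (f : Fin n → α) (a : α) : ℝ :=
  ((Finset.univ.filter fun i => f i = a).card : ℝ) / n

/-- `p` is a type of length-`n` sequences. -/
def IsJointType {α : Type*} [Fintype α] (n : ℕ) (p : α → ℝ) : Prop :=
  ∃ f : Fin n → α, ∀ a, p a = empDist f a

/-- `V` is a conditional type (of length `n`) given the joint type `p`. -/
def IsCondType (n : ℕ) (p : 𝒳 × 𝒴 → ℝ) (V : 𝒳 × 𝒴 → 𝒲 → ℝ) : Prop :=
  IsChannel V ∧ ∀ a, 0 < p a → ∀ w, ∃ c : ℕ, V a w = c / (n * p a)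

/-- The uniform distribution on the type class of the joint type `p`. -/
def unifType (n : ℕ) (p : 𝒳 × 𝒴 → ℝ) : (Fin n → 𝒳 × 𝒴) → ℝ :=
  fun f => if ∀ a, empDist f a = p a then
    (1 : ℝ) / ((Finset.univ.filter fun g : Fin n → 𝒳 × 𝒴 => ∀ a, empDist g a = p a).card : ℝ)
  else 0

/-- The single-letter Gray–Wyner region `ℛ*_GW(P_XY)`. -/
def RegionGW (p : 𝒳 × 𝒴 → ℝ) : Set (ℝ × ℝ × ℝ) :=
  { r | ∃ k, k ≤ Fintype.card 𝒳 * Fintype.card 𝒴 + 2 ∧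
      ∃ K : 𝒳 × 𝒴 → Fin k → ℝ, IsChannel K ∧
        mutInfoW p K ≤ r.1 ∧ condEntX p K ≤ r.2.1 ∧ condEntY p K ≤ r.2.2 }

/-- `X - W - Y` forms a Markov chain (conditional independence given `W`). -/
def MarkovXWY {k : ℕ} (p : 𝒳 × 𝒴 → ℝ) (K : 𝒳 × 𝒴 → Fin k → ℝ) : Prop :=
  ∀ w x y, jointW p K (w, (x, y)) * outW p K w = margWX p K (w, x) * margWY p K (w, y)

/-- The part of the region lying on the Pangloss plane `r0 + r1 + r2 = H(X,Y)`. -/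
def PanglossSet (p : 𝒳 × 𝒴 → ℝ) : Set (ℝ × ℝ × ℝ) :=
  { r | r ∈ RegionGW p ∧ r.1 + r.2.1 + r.2.2 = ent p }

/-- The distribution corresponding to the parameter `θ`, with respect to the
labelling `e` of the support: `P_θ(e i) = θ i` for `i < m`, and the last mass
is `1 - ∑ θ`. -/
def paramDist {α : Type*} {m : ℕ} (e : Fin (m + 1) → α) (θ : Fin m → ℝ) (a : α) : ℝ :=
  (∑ i : Fin m, if e i.castSucc = a then θ i else 0) +
    (if e (Fin.last m) = a then 1 - ∑ i, θ i else 0)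

/-- Variance of `g` under the distribution `p`. -/
def varOf {α : Type*} [Fintype α] (p : α → ℝ) (g : α → ℝ) : ℝ :=
  ∑ a, p a * (g a - ∑ b, p b * g b) ^ 2

/-- The Gaussian upper-tail probability `Q(t)`. -/
def Qfun (t : ℝ) : ℝ :=
  ∫ u in Set.Ioi t, (1 / Real.sqrt (2 * Real.pi)) * Real.exp (-(u ^ 2) / 2)

end

end GW

open GW

/-! ### Support reduction -/

/-- Carathéodory-type reduction: nonnegative weights can be moved onto at most `|κ|` points without
changing the `κ`-indexed moments and without decreasing one further linear objective `g`. As `g` is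
only bounded from one side, it costs no support point. The hypothesis `hv` says that the moments
determine the total mass. -/
lemma exists_small_support {ι κ : Type*} [Fintype ι] [Fintype κ] (v : ι → κ → ℝ) (g : ι → ℝ)
    (hv : ∀ c : ι → ℝ, (∀ k, ∑ i, c i * v i k = 0) → ∑ i, c i = 0)
    (lam : ι → ℝ) (hlam : ∀ i, 0 ≤ lam i) :
    ∃ mu : ι → ℝ, (∀ i, 0 ≤ mu i) ∧ (∀ k, ∑ i, mu i * v i k = ∑ i, lam i * v i k) ∧
      ∑ i, lam i * g i ≤ ∑ i, mu i * g i ∧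
      (univ.filter fun i => mu i ≠ 0).card ≤ Fintype.card κ := by
  induction h : (univ.filter fun i => lam i ≠ 0).card using Nat.strong_induction_on
    generalizing lam with
  | _ N ih =>
  by_cases hN : N ≤ Fintype.card κ
  · exact ⟨lam, hlam, fun _ => rfl, le_rfl, h ▸ hN⟩
  push Not at hN
  set S := univ.filter fun i => lam i ≠ 0 with hS
  -- more support points than coordinates: a nontrivial linear relation on the support
  have hdep : ¬ LinearIndependent ℝ (fun i : S => v i) := by
    intro hli
    have := hli.fintype_card_le_finrank
    simp at this
    omega
  obtain ⟨c0, hc0, i0, hi0⟩ := Fintype.not_linearIndependent_iff.1 hdep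
  obtain ⟨c, hcv, hcS, hcne, hcg⟩ : ∃ c : ι → ℝ, (∀ k, ∑ i, c i * v i k = 0) ∧
      (∀ i, c i ≠ 0 → lam i ≠ 0) ∧ (∃ i, c i ≠ 0) ∧ 0 ≤ ∑ i, c i * g i := by
    let c1 : ι → ℝ := fun i => if hi : i ∈ S then c0 ⟨i, hi⟩ else 0
    have h1 : ∀ k, ∑ i, c1 i * v i k = 0 := by
      intro k
      have h2 := congrFun hc0 k
      simp only [Finset.sum_apply, Pi.smul_apply, smul_eq_mul, Pi.zero_apply] at h2
      rw [← h2, ← Finset.sum_subset (Finset.subset_univ S), ← Finset.sum_coe_sort S]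
      · refine Finset.sum_congr rfl fun i _ => ?_
        simp [c1]
      · intro i _ hi
        simp [c1, hi]
    have h2 : ∀ i, c1 i ≠ 0 → lam i ≠ 0 := by
      intro i hi
      by_contra h3
      exact hi (by simp [c1, hS, h3])
    have h3 : c1 i0 ≠ 0 := by simpa [c1] using hi0
    rcases le_total 0 (∑ i, c1 i * g i) with hg | hg
    · exact ⟨c1, h1, h2, ⟨_, h3⟩, hg⟩
    · refine ⟨fun i => - c1 i, ?_, ?_, ⟨i0, ?_⟩, ?_⟩
      · intro k
        simp [h1 k]
      · intro i hi
        exact h2 i (by simpa using hi)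
      · simpa using h3
      · simpa using hg
  have hsum := hv c hcv
  have hneg : (univ.filter fun i => c i < 0).Nonempty := by
    by_contra hne
    rw [Finset.not_nonempty_iff_eq_empty, Finset.filter_eq_empty_iff] at hne
    obtain ⟨i, hi⟩ := hcne
    have := (Finset.sum_eq_zero_iff_of_nonneg (fun i _ => not_lt.1 (hne (Finset.mem_univ i)))).1 hsum
    exact hi (this i (Finset.mem_univ i))
  -- the largest step along `c` keeping all weights nonnegative
  obtain ⟨i1, hi1, hmin⟩ := Finset.exists_min_image _ (fun i => lam i / (- c i)) hneg
  simp only [Finset.mem_filter, Finset.mem_univ, true_and] at hi1 hmin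
  set t := lam i1 / (- c i1) with ht
  have ht0 : 0 ≤ t := div_nonneg (hlam _) (by linarith)
  let mu : ι → ℝ := fun i => lam i + t * c i
  have hmu0 : ∀ i, 0 ≤ mu i := by
    intro i
    rcases lt_or_ge (c i) 0 with hc | hc
    · have := (le_div_iff₀ (by linarith)).1 (hmin i hc)
      simp only [mu]; linarith
    · have := mul_nonneg ht0 hc
      have := hlam i
      simp only [mu]; linarith
  have hmu1 : mu i1 = 0 := by
    have : c i1 ≠ 0 := hi1.ne
    simp only [mu, ht]; field_simp; ring
  have hexp : ∀ u : ι → ℝ, ∑ i, mu i * u i = ∑ i, lam i * u i + t * ∑ i, c i * u i := by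
    intro u
    rw [Finset.mul_sum, ← Finset.sum_add_distrib]
    exact Finset.sum_congr rfl fun i _ => by simp only [mu]; ring
  have hlt : (univ.filter fun i => mu i ≠ 0).card < N := by
    rw [← h]
    apply Finset.card_lt_card
    rw [Finset.ssubset_iff_of_subset]
    · refine ⟨i1, ?_, by simp [hmu1]⟩
      simpa [hS] using hcS i1 hi1.ne
    · intro i hi
      simp only [Finset.mem_filter, Finset.mem_univ, true_and, hS] at hi ⊢
      intro h0
      by_cases hc : c i = 0
      · exact hi (by simp [mu, h0, hc])
      · exact hcS i hc h0
  obtain ⟨nu, h1, h2, h3, h4⟩ := ih _ hlt mu hmu0 rfl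
  refine ⟨nu, h1, fun k => ?_, le_trans ?_ h3, h4⟩
  · rw [h2, hexp (fun i => v i k), hcv k]; simp
  · rw [hexp g]; have := mul_nonneg ht0 hcg; linarith

/-! ### Size of a type class -/

lemma factorial_mul_pow_le (j k : ℕ) : j.factorial * j ^ k ≤ k.factorial * j ^ j := by
  rcases le_total j k with h | h
  · calc j.factorial * j ^ k = j.factorial * j ^ (k - j) * j ^ j := by
          rw [mul_assoc, ← pow_add, Nat.sub_add_cancel h]
      _ ≤ _ := Nat.mul_le_mul_right _ (Nat.factorial_mul_pow_sub_le_factorial h)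
  · have h1 : j.factorial ≤ k.factorial * j ^ (j - k) := by
      have h2 := Nat.factorial_mul_ascFactorial k (j - k)
      have h3 := Nat.ascFactorial_le_pow_add k (j - k)
      rw [Nat.add_sub_cancel' h] at h2 h3
      rw [← h2]
      exact Nat.mul_le_mul_left _ h3
    calc j.factorial * j ^ k ≤ k.factorial * j ^ (j - k) * j ^ k := Nat.mul_le_mul_right _ h1
      _ = _ := by rw [mul_assoc, ← pow_add, Nat.sub_add_cancel h]

/-- The size of a type class is at least the multinomial coefficient: permuting the positions of `f`
stays in the type class, and each word is hit by at most `∏ (count a)!` permutations. -/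
lemma factorial_le_card_typeClass {A : Type*} [Fintype A] {n : ℕ} (f : Fin n → A) :
    n.factorial ≤ (univ.filter fun g : Fin n → A => ∀ a, empDist g a = empDist f a).card *
      ∏ a, (univ.filter fun i => f i = a).card.factorial := by
  set T := univ.filter fun g : Fin n → A => ∀ a, empDist g a = empDist f a
  have hmaps : ∀ s ∈ (univ : Finset (Equiv.Perm (Fin n))), (f ∘ s) ∈ T := by
    intro s _
    simp only [T, Finset.mem_filter, Finset.mem_univ, true_and]
    intro a
    unfold empDist
    congr 2
    refine Finset.card_bij (fun i _ => s i) ?_ ?_ ?_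
    · intro i hi; simpa using hi
    · intro i _ j _ hij; exact s.injective hij
    · intro i hi; exact ⟨s.symm i, by simpa using hi, by simp⟩
  have hst : Fintype.card {g : Equiv.Perm (Fin n) // f ∘ g = f} =
      ∏ a, (univ.filter fun i => f i = a).card.factorial := by
    rw [DomMulAct.stabilizer_card f]
    refine Finset.prod_congr rfl fun a _ => ?_
    rw [Fintype.card_subtype]
  have hcard := Finset.card_eq_sum_card_fiberwise hmaps
  rw [Finset.card_univ, Fintype.card_perm, Fintype.card_fin] at hcard
  rw [hcard, ← smul_eq_mul]
  refine Finset.sum_le_card_nsmul _ _ _ fun h _ => ?_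
  rw [← hst, Fintype.card_subtype]
  -- a nonempty fibre of `s ↦ f ∘ s` is a coset of the stabilizer of `f`
  by_cases hne : ∃ s0 : Equiv.Perm (Fin n), f ∘ s0 = h
  · obtain ⟨s0, rfl⟩ := hne
    refine Finset.card_le_card_of_injOn (fun s => s * s0⁻¹) ?_ ?_
    · intro s hs
      simp only [Finset.coe_filter, Finset.mem_univ, true_and, Set.mem_ofPred_eq] at hs ⊢
      funext i
      have := congrFun hs (s0⁻¹ i)
      simpa using this
    · intro s _ s' _ hss
      simpa using hss
  · rw [Finset.filter_false_of_mem]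
    · simp
    · intro s _ hs; exact hne ⟨s, hs⟩

/-- A type class is nonempty and has at least `2 ^ (n H(p)) / (n + 1) ^ |A|` elements. In the
multinomial expansion of `(∑ p a) ^ n = 1` there are at most `(n + 1) ^ |A|` terms, and the term of
the type `p` itself is the largest. -/
lemma ent_le_log_card_typeClass {A : Type*} [Fintype A] {n : ℕ} (hn : 0 < n) (p : A → ℝ)
    (hp : IsJointType n p) :
    (univ.filter fun g : Fin n → A => ∀ a, empDist g a = p a).Nonempty ∧
    n * ent p - Fintype.card A * Real.logb 2 (n + 1) ≤
      Real.logb 2 ((univ.filter fun g : Fin n → A => ∀ a, empDist g a = p a).card : ℝ) := by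
  obtain ⟨f, hf⟩ := hp
  obtain rfl : p = empDist f := funext hf
  set T := univ.filter fun g : Fin n → A => ∀ a, empDist g a = empDist f a with hT
  have hTne : T.Nonempty := ⟨f, by simp [hT]⟩
  refine ⟨hTne, ?_⟩
  have hn' : (0 : ℝ) < n := by exact_mod_cast hn
  let j : A → ℕ := fun a => (univ.filter fun i => f i = a).card
  have hj : ∀ a, empDist f a = j a / n := fun a => rfl
  have hjsum : ∑ a, j a = n := by
    have := Finset.card_eq_sum_card_fiberwise (f := f) (s := univ) (t := univ) (by simp)
    simpa [j] using this.symm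
  have hpsum : ∑ a, empDist f a = 1 := by
    simp only [hj]
    rw [← Finset.sum_div, ← Nat.cast_sum, hjsum, div_self hn'.ne']
  have hmult := Finset.sum_pow_eq_sum_piAntidiag (univ : Finset A) (empDist f) n
  rw [hpsum, one_pow] at hmult
  set Pj : ℝ := ∏ a, empDist f a ^ j a with hPj
  have hPj0 : 0 < Pj := by
    refine Finset.prod_pos fun a _ => ?_
    rcases Nat.eq_zero_or_pos (j a) with h | h
    · simp [h]
    · have : (0 : ℝ) < j a := by exact_mod_cast h
      rw [hj]; positivity
  -- the type class of `f` is the most likely one under the product of its own type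
  have hterm : ∀ k ∈ Finset.piAntidiag (univ : Finset A) n,
      (Nat.multinomial univ k : ℝ) * ∏ a, empDist f a ^ k a ≤ T.card * Pj := by
    intro k hk
    have hks : ∑ a, k a = n := (Finset.mem_piAntidiag.1 hk).1
    have h1 : (∏ a, ((k a).factorial : ℝ)) * Nat.multinomial univ k = n.factorial := by
      have := Nat.multinomial_spec univ k
      rw [hks] at this; exact_mod_cast this
    have h2 : (n.factorial : ℝ) ≤ T.card * ∏ a, ((j a).factorial : ℝ) := by
      exact_mod_cast factorial_le_card_typeClass f
    have h3 : (∏ a, ((j a).factorial : ℝ)) * ∏ a, (j a : ℝ) ^ k a ≤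
        (∏ a, ((k a).factorial : ℝ)) * ∏ a, (j a : ℝ) ^ j a := by
      rw [← Finset.prod_mul_distrib, ← Finset.prod_mul_distrib]
      refine Finset.prod_le_prod (fun a _ => by positivity) fun a _ => ?_
      exact_mod_cast factorial_mul_pow_le (j a) (k a)
    have h4 : ∀ l : A → ℕ, ∑ a, l a = n →
        ∏ a, empDist f a ^ l a = (∏ a, (j a : ℝ) ^ l a) / n ^ n := by
      intro l hl
      simp only [hj, div_pow]
      rw [Finset.prod_div_distrib, Finset.prod_pow_eq_pow_sum, hl]
    have hkpos : 0 < ∏ a, ((k a).factorial : ℝ) :=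
      Finset.prod_pos fun a _ => by exact_mod_cast Nat.factorial_pos _
    rw [hPj, h4 k hks, h4 j hjsum, ← mul_div_assoc, ← mul_div_assoc]
    refine div_le_div_of_nonneg_right ?_ (by positivity)
    refine le_of_mul_le_mul_left ?_ hkpos
    have hjk : 0 ≤ ∏ a, (j a : ℝ) ^ k a := Finset.prod_nonneg fun a _ => by positivity
    calc _ = (n.factorial : ℝ) * ∏ a, (j a : ℝ) ^ k a := by rw [← mul_assoc, h1]
      _ ≤ (T.card * ∏ a, ((j a).factorial : ℝ)) * ∏ a, (j a : ℝ) ^ k a :=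
          mul_le_mul_of_nonneg_right h2 hjk
      _ = T.card * ((∏ a, ((j a).factorial : ℝ)) * ∏ a, (j a : ℝ) ^ k a) := by ring
      _ ≤ T.card * ((∏ a, ((k a).factorial : ℝ)) * ∏ a, (j a : ℝ) ^ j a) := by gcongr
      _ = _ := by ring
  have hcnt : (Finset.piAntidiag (univ : Finset A) n).card ≤ (n + 1) ^ Fintype.card A := by
    have : Finset.piAntidiag (univ : Finset A) n ⊆
        Fintype.piFinset fun _ : A => Finset.range (n + 1) := by
      intro k hk
      rw [Fintype.mem_piFinset]
      intro a
      have hks : ∑ a, k a = n := (Finset.mem_piAntidiag.1 hk).1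
      have := Finset.single_le_sum (f := k) (fun _ _ => Nat.zero_le _) (Finset.mem_univ a)
      simp; omega
    have h := Finset.card_le_card this
    simpa using h
  have hTpos : (0 : ℝ) < T.card := by exact_mod_cast hTne.card_pos
  have hmain : (1 : ℝ) ≤ (n + 1) ^ Fintype.card A * (T.card * Pj) := by
    refine hmult.le.trans ?_
    refine (Finset.sum_le_card_nsmul _ _ _ hterm).trans ?_
    rw [nsmul_eq_mul]
    refine mul_le_mul_of_nonneg_right ?_ (by positivity)
    exact_mod_cast hcnt
  have hlog := Real.logb_le_logb_of_le (b := 2) (by norm_num) one_pos hmain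
  rw [Real.logb_one, Real.logb_mul (by positivity) (by positivity),
    Real.logb_mul (by positivity) hPj0.ne', Real.logb_pow] at hlog
  have hPlog : Real.logb 2 Pj = - (n * ent (empDist f)) := by
    rw [hPj, Real.logb_prod]
    · unfold ent
      rw [mul_neg, neg_neg, Finset.mul_sum]
      refine Finset.sum_congr rfl fun a _ => ?_
      rw [Real.logb_pow, hj]; field_simp
    · intro a _
      exact Finset.prod_ne_zero_iff.1 hPj0.ne' a (Finset.mem_univ a)
  linarith

/-! ### Test channels from mixtures -/

/-- Chain rule `H(W, A) = H(W) + H(A | W)`. -/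
lemma ent_joint {W A : Type*} [Fintype W] [Fintype A] (lam : W → ℝ) (q : W → A → ℝ)
    (hq : ∀ w, ∑ a, q w a = 1) :
    ent (fun z : W × A => lam z.1 * q z.1 z.2) = ent lam + ∑ w, lam w * ent (q w) := by
  unfold ent
  rw [Fintype.sum_prod_type, ← Finset.sum_neg_distrib, ← Finset.sum_neg_distrib,
    ← Finset.sum_add_distrib]
  refine Finset.sum_congr rfl fun w _ => ?_
  have h : ∀ a, lam w * q w a * Real.logb 2 (lam w * q w a) =
      q w a * (lam w * Real.logb 2 (lam w)) + lam w * (q w a * Real.logb 2 (q w a)) := by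
    intro a
    by_cases h1 : lam w = 0
    · simp [h1]
    by_cases h2 : q w a = 0
    · simp [h2]
    rw [Real.logb_mul h1 h2]; ring
  simp only [h, Finset.sum_add_distrib, ← Finset.sum_mul, ← Finset.mul_sum, hq]
  ring

/-- A decomposition of `p` as a mixture of conditional laws `q w` with weights `lam w` is realized
by a test channel. Where `p a = 0` the channel row is irrelevant and `lam` is used for it. -/
lemma exists_channel {𝒳 𝒴 W : Type*} [Fintype 𝒳] [Fintype 𝒴] [Fintype W]
    (p : 𝒳 × 𝒴 → ℝ) (hp0 : ∀ a, 0 ≤ p a) (lam : W → ℝ) (hlam : IsProb lam)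
    (q : W → 𝒳 × 𝒴 → ℝ) (hq : ∀ w, IsProb (q w)) (hmix : ∀ a, ∑ w, lam w * q w a = p a) :
    ∃ V : 𝒳 × 𝒴 → W → ℝ, IsChannel V ∧
      mutInfoW p V = ent p - ∑ w, lam w * ent (q w) ∧
      condEntX p V = ∑ w, lam w * ent (fun x => ∑ y, q w (x, y)) ∧
      condEntY p V = ∑ w, lam w * ent (fun y => ∑ x, q w (x, y)) := by
  let V : 𝒳 × 𝒴 → W → ℝ := fun a w => if p a = 0 then lam w else lam w * q w a / p a
  have hV : ∀ a w, p a * V a w = lam w * q w a := by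
    intro a w
    by_cases h : p a = 0
    · have h0 := (Finset.sum_eq_zero_iff_of_nonneg
        (fun w _ => mul_nonneg (hlam.1 w) ((hq w).1 a))).1 ((hmix a).trans h) w (Finset.mem_univ w)
      rw [h, zero_mul, h0]
    · simp only [V, if_neg h]; field_simp
  have hout : outW p V = lam := by
    funext w
    simp only [outW, hV, ← Finset.mul_sum, (hq w).2, mul_one]
  have hj : jointW p V = fun z : W × (𝒳 × 𝒴) => lam z.1 * q z.1 z.2 := by
    funext z; exact hV _ _
  have hX : margWX p V = fun z : W × 𝒳 => lam z.1 * (fun w x => ∑ y, q w (x, y)) z.1 z.2 := by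
    funext z; simp only [margWX, hV, Finset.mul_sum]
  have hY : margWY p V = fun z : W × 𝒴 => lam z.1 * (fun w y => ∑ x, q w (x, y)) z.1 z.2 := by
    funext z; simp only [margWY, hV, Finset.mul_sum]
  refine ⟨V, ?_, ?_, ?_, ?_⟩
  · intro a
    by_cases h : p a = 0
    · simpa [V, h] using hlam
    · refine ⟨fun w => ?_, ?_⟩
      · simp only [V, if_neg h]
        exact div_nonneg (mul_nonneg (hlam.1 w) ((hq w).1 a)) (hp0 a)
      · simp only [V, if_neg h]
        rw [← Finset.sum_div, hmix, div_self h]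
  · rw [mutInfoW, hout, hj, ent_joint lam q fun w => (hq w).2]; ring
  · rw [condEntX, hout, hX, ent_joint lam fun w x => ∑ y, q w (x, y)]
    · ring
    · intro w; rw [← (hq w).2, Fintype.sum_prod_type]
  · rw [condEntY, hout, hY, ent_joint lam fun w y => ∑ x, q w (x, y)]
    · ring
    · intro w; rw [← (hq w).2, Fintype.sum_prod_type_right]

/-- As in `exists_channel`, with the alphabet cut down to `|𝒳||𝒴| + 2` letters: the support reduction
keeps the mixture and the two conditional entropies, and does not decrease `H(X,Y|W)`. -/
lemma exists_channel_small {𝒳 𝒴 ι : Type*} [Fintype 𝒳] [Fintype 𝒴] [Fintype ι]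
    (p : 𝒳 × 𝒴 → ℝ) (hp0 : ∀ a, 0 ≤ p a) (lam : ι → ℝ) (hlam : IsProb lam)
    (q : ι → 𝒳 × 𝒴 → ℝ) (hq : ∀ w, IsProb (q w)) (hmix : ∀ a, ∑ w, lam w * q w a = p a) :
    ∃ k, k ≤ Fintype.card 𝒳 * Fintype.card 𝒴 + 2 ∧
      ∃ V : 𝒳 × 𝒴 → Fin k → ℝ, IsChannel V ∧
      mutInfoW p V ≤ ent p - ∑ w, lam w * ent (q w) ∧
      condEntX p V = ∑ w, lam w * ent (fun x => ∑ y, q w (x, y)) ∧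
      condEntY p V = ∑ w, lam w * ent (fun y => ∑ x, q w (x, y)) := by
  let v : ι → (𝒳 × 𝒴) ⊕ Fin 2 → ℝ := fun w => Sum.elim (q w)
    ![ent (fun x => ∑ y, q w (x, y)), ent (fun y => ∑ x, q w (x, y))]
  obtain ⟨mu, hmu0, hmuv, hmug, hcard⟩ := exists_small_support v (fun w => ent (q w))
    (by
      intro c hc
      have h1 : ∀ a, ∑ i, c i * q i a = 0 := fun a => hc (Sum.inl a)
      calc ∑ i, c i = ∑ i, ∑ a, c i * q i a := by
            refine Finset.sum_congr rfl fun i _ => ?_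
            rw [← Finset.mul_sum, (hq i).2, mul_one]
        _ = 0 := by rw [Finset.sum_comm]; simp [h1]) lam hlam.1
  set S := univ.filter fun i => mu i ≠ 0 with hS
  have hres : ∀ u : ι → ℝ, ∑ j : Fin S.card, mu (S.equivFin.symm j) * u (S.equivFin.symm j) =
      ∑ i, mu i * u i := by
    intro u
    rw [Equiv.sum_comp S.equivFin.symm (fun s : S => mu s * u s),
      Finset.sum_coe_sort S (fun i => mu i * u i)]
    refine Finset.sum_subset (Finset.subset_univ S) fun i _ hi => ?_
    have : mu i = 0 := by simpa [hS] using hi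
    simp [this]
  have hmuq : ∀ a, ∑ i, mu i * q i a = p a := fun a => (hmuv (Sum.inl a)).trans (hmix a)
  have hmass : ∀ c : ι → ℝ, ∑ i, c i = ∑ a, ∑ i, c i * q i a := by
    intro c
    rw [Finset.sum_comm]
    refine Finset.sum_congr rfl fun i _ => ?_
    rw [← Finset.mul_sum, (hq i).2, mul_one]
  have hmu1 : ∑ i, mu i = 1 := by
    rw [hmass]; simp only [hmuq]
    rw [← hlam.2, hmass lam]; simp only [hmix]
  obtain ⟨V, hV, hI, hX, hY⟩ := exists_channel p hp0 (fun j : Fin S.card => mu (S.equivFin.symm j))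
    ⟨fun _ => hmu0 _, by simpa [hmu1] using hres fun _ => 1⟩ (fun j => q (S.equivFin.symm j))
    (fun j => hq _) (fun a => (hres fun i => q i a).trans (hmuq a))
  refine ⟨S.card, by simpa using hcard, V, hV, ?_, ?_, ?_⟩
  · rw [hI, hres fun i => ent (q i)]; linarith
  · rw [hX, hres fun i => ent (fun x => ∑ y, q i (x, y))]
    exact hmuv (Sum.inr 0)
  · rw [hY, hres fun i => ent (fun y => ∑ x, q i (x, y))]
    exact hmuv (Sum.inr 1)

/-! ### Empirical laws and Gibbs inequality -/

/-- The empirical distribution of `F g` when `g` is uniform on `B`. -/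
noncomputable def law {G Z : Type*} (B : Finset G) (F : G → Z) (z : Z) : ℝ :=
  ((B.filter fun g => F g = z).card : ℝ) / B.card

lemma sum_law_mul {G Z : Type*} [Fintype Z] (B : Finset G) (F : G → Z) (φ : Z → ℝ) :
    ∑ z, law B F z * φ z = (∑ g ∈ B, φ (F g)) / B.card := by
  rw [← Finset.sum_fiberwise B F (fun g => φ (F g)), Finset.sum_div]
  refine Finset.sum_congr rfl fun z _ => ?_
  have : ∑ g ∈ B.filter (fun g => F g = z), φ (F g) = ∑ g ∈ B.filter (fun g => F g = z), φ z :=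
    Finset.sum_congr rfl fun g hg => by rw [(Finset.mem_filter.1 hg).2]
  rw [this, Finset.sum_const, nsmul_eq_mul, law]; ring

lemma isProb_law {G Z : Type*} [Fintype Z] {B : Finset G} (hB : B.Nonempty) (F : G → Z) :
    IsProb (law B F) := by
  refine ⟨fun z => by unfold law; positivity, ?_⟩
  have h := sum_law_mul B F fun _ => 1
  have : (B.card : ℝ) ≠ 0 := by exact_mod_cast hB.card_pos.ne'
  simpa [this] using h

lemma ent_law {G Z : Type*} [Fintype Z] (B : Finset G) (F : G → Z) :
    ent (law B F) = (∑ g ∈ B, - Real.logb 2 (law B F (F g))) / B.card := by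
  unfold ent
  rw [sum_law_mul B F fun z => Real.logb 2 (law B F z), Finset.sum_neg_distrib, neg_div]

lemma law_pos {G Z : Type*} {B : Finset G} (F : G → Z) {g : G} (hg : g ∈ B) :
    0 < law B F (F g) := by
  have h1 : 0 < (B.filter fun g' => F g' = F g).card :=
    Finset.card_pos.2 ⟨g, by simp [hg]⟩
  have h2 : 0 < B.card := Finset.card_pos.2 ⟨g, hg⟩
  unfold law; positivity

lemma logb_two_le {x : ℝ} (hx : 0 < x) : Real.logb 2 x ≤ (x - 1) / Real.log 2 := by
  have := Real.log_le_sub_one_of_pos hx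
  have h2 : 0 < Real.log 2 := Real.log_pos (by norm_num)
  unfold Real.logb
  gcongr

/-- Gibbs' inequality: the entropy of a law is at most its cross entropy against any
(sub-)distribution `Q` charging every value taken by `F`. -/
lemma ent_law_le {G Z : Type*} [Fintype Z] (B : Finset G) (F : G → Z) (Q : Z → ℝ)
    (hQ0 : ∀ z, 0 ≤ Q z) (hQ1 : ∑ z, Q z ≤ 1) (hQpos : ∀ g ∈ B, 0 < Q (F g)) :
    ent (law B F) ≤ (∑ g ∈ B, - Real.logb 2 (Q (F g))) / B.card := by
  rcases B.eq_empty_or_nonempty with rfl | hB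
  · rw [ent_law]; simp
  have hlog2 : 0 < Real.log 2 := Real.log_pos (by norm_num)
  have hterm : ∀ z, law B F z * Real.logb 2 (Q z) - law B F z * Real.logb 2 (law B F z) ≤
      (Q z - law B F z) / Real.log 2 := by
    intro z
    by_cases h : ∃ g ∈ B, F g = z
    · obtain ⟨g, hg, rfl⟩ := h
      have h1 := law_pos F hg
      have h2 := hQpos g hg
      rw [← mul_sub, ← Real.logb_div h2.ne' h1.ne']
      calc _ ≤ law B F (F g) * ((Q (F g) / law B F (F g) - 1) / Real.log 2) :=
            mul_le_mul_of_nonneg_left (logb_two_le (div_pos h2 h1)) h1.le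
        _ = _ := by field_simp
    · have : law B F z = 0 := by
        unfold law
        rw [Finset.filter_false_of_mem fun g hg hz => h ⟨g, hg, hz⟩]; simp
      rw [this]
      have := div_nonneg (hQ0 z) hlog2.le
      simpa using this
  have hsum := Finset.sum_le_sum fun z (_ : z ∈ univ) => hterm z
  rw [← Finset.sum_div, Finset.sum_sub_distrib, Finset.sum_sub_distrib, (isProb_law hB F).2,
    sum_law_mul B F fun z => Real.logb 2 (Q z)] at hsum
  have h0 : (∑ z, Q z - 1) / Real.log 2 ≤ 0 := div_nonpos_of_nonpos_of_nonneg (by linarith) hlog2.le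
  rw [Finset.sum_neg_distrib, neg_div, ent]
  linarith

/-- The marginal of an empirical law under a map `π`. -/
lemma law_comp {G Z U : Type*} [Fintype Z] (B : Finset G) (F : G → Z) (π : Z → U) (u : U) :
    ∑ z ∈ univ.filter (fun z => π z = u), law B F z = law B (fun g => π (F g)) u := by
  have h := sum_law_mul B F fun z => if π z = u then 1 else 0
  rw [Finset.sum_filter]
  simpa [law, Finset.sum_ite] using h

/-! ### Single-letter bounds for a set of words -/

/-- The words of `D` which have the same common message as `f` and agree with `f` before time `i`.
These classes are the values of the auxiliary variable `W_i = (M₀, X^{i-1}, Y^{i-1})`. -/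
noncomputable def cl {A : Type*} {n : ℕ} {M : Type*} (D : Finset (Fin n → A)) (m : (Fin n → A) → M) (i : ℕ)
    (f : Fin n → A) : Finset (Fin n → A) :=
  D.filter fun g => m g = m f ∧ ∀ j : Fin n, (j : ℕ) < i → g j = f j

section
variable {A : Type*} {n : ℕ} {M : Type*} (D : Finset (Fin n → A)) (m : (Fin n → A) → M)

lemma mem_cl {i : ℕ} {f g : Fin n → A} :
    g ∈ cl D m i f ↔ g ∈ D ∧ m g = m f ∧ ∀ j : Fin n, (j : ℕ) < i → g j = f j := by
  simp [cl]

lemma cl_eq {i : ℕ} {f g : Fin n → A} (h : g ∈ cl D m i f) : cl D m i g = cl D m i f := by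
  obtain ⟨_, h1, h2⟩ := (mem_cl D m).1 h
  ext u
  rw [mem_cl, mem_cl, h1]
  refine and_congr_right fun _ => and_congr_right fun _ => forall_congr' fun j => ?_
  refine imp_congr_right fun hj => ?_
  rw [h2 j hj]

lemma self_mem_cl {i : ℕ} {f : Fin n → A} (h : f ∈ D) : f ∈ cl D m i f :=
  (mem_cl D m).2 ⟨h, rfl, fun _ _ => rfl⟩

lemma card_cl_pos {i : ℕ} {f : Fin n → A} (h : f ∈ D) : (0 : ℝ) < (cl D m i f).card := by
  exact_mod_cast Finset.card_pos.2 ⟨f, self_mem_cl D m h⟩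

/-- Averaging over the classes first, and then over the words, is averaging over the words. -/
lemma sum_cl_avg (i : ℕ) (h : (Fin n → A) → ℝ) :
    ∑ f ∈ D, (∑ g ∈ cl D m i f, h g) / (cl D m i f).card = ∑ g ∈ D, h g := by
  have hsymm : ∀ f g, (f ∈ D ∧ g ∈ cl D m i f) ↔ (f ∈ cl D m i g ∧ g ∈ D) := by
    intro f g
    simp only [mem_cl]
    constructor
    · rintro ⟨h1, h2, h3, h4⟩
      exact ⟨⟨h1, h3.symm, fun j hj => (h4 j hj).symm⟩, h2⟩
    · rintro ⟨⟨h1, h3, h4⟩, h2⟩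
      exact ⟨h1, h2, h3.symm, fun j hj => (h4 j hj).symm⟩
  simp only [Finset.sum_div]
  rw [Finset.sum_comm' hsymm]
  refine Finset.sum_congr rfl fun g hg => ?_
  have : ∀ f ∈ cl D m i g, h g / (cl D m i f).card = h g / (cl D m i g).card :=
    fun f hf => by rw [cl_eq D m hf]
  rw [Finset.sum_congr rfl this, Finset.sum_const, nsmul_eq_mul]
  have := (card_cl_pos D m (i := i) hg).ne'
  field_simp

lemma law_cl (i : Fin n) (f : Fin n → A) :
    law (cl D m i f) (fun g => g i) (f i) =
      ((cl D m (i + 1) f).card : ℝ) / (cl D m i f).card := by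
  have : (cl D m i f).filter (fun g => g i = f i) = cl D m (i + 1) f := by
    ext g
    rw [Finset.mem_filter, mem_cl, mem_cl]
    constructor
    · rintro ⟨⟨h1, h2, h3⟩, h4⟩
      refine ⟨h1, h2, fun j hj => ?_⟩
      rcases Nat.lt_succ_iff_lt_or_eq.1 hj with h | h
      · exact h3 j h
      · rw [Fin.ext h, h4]
    · rintro ⟨h1, h2, h3⟩
      exact ⟨⟨h1, h2, fun j hj => h3 j (by omega)⟩, h3 i (by omega)⟩
  rw [law, this]

lemma sum_log_ratio (φ : ℕ → ℝ) (hφ : ∀ i, 0 < φ i) :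
    ∑ i : Fin n, - Real.logb 2 (φ (i + 1) / φ i) = Real.logb 2 (φ 0) - Real.logb 2 (φ n) := by
  rw [Fin.sum_univ_eq_sum_range (fun i => - Real.logb 2 (φ (i + 1) / φ i)) n,
    ← Finset.sum_range_sub' (fun i => Real.logb 2 (φ i)) n]
  refine Finset.sum_congr rfl fun i _ => ?_
  rw [Real.logb_div (hφ _).ne' (hφ _).ne']; ring

/-- Chain rule: `∑ i, H(X_i Y_i | W_i) = H(X^n Y^n | M₀)` for a uniform word of `D`, multiplied by
`|D|`. The class of `f` at time `n` is `{f}`, so the telescoping sum leaves the class at time `0`. -/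
lemma sum_ent_pair [Fintype A] :
    ∑ f ∈ D, ∑ i : Fin n, ent (law (cl D m i f) fun g => g i) =
      ∑ f ∈ D, Real.logb 2 (cl D m 0 f).card := by
  rw [Finset.sum_comm]
  have h : ∀ i : Fin n, ∑ f ∈ D, ent (law (cl D m i f) fun g => g i) =
      ∑ f ∈ D, - Real.logb 2 ((cl D m (i + 1) f).card / (cl D m i f).card : ℝ) := by
    intro i
    rw [← sum_cl_avg D m i fun g =>
      - Real.logb 2 ((cl D m (i + 1) g).card / (cl D m i g).card : ℝ)]
    refine Finset.sum_congr rfl fun f _ => ?_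
    rw [ent_law]
    congr 1
    refine Finset.sum_congr rfl fun g hg => ?_
    rw [← law_cl, cl_eq D m hg]
  simp only [h]
  rw [Finset.sum_comm]
  refine Finset.sum_congr rfl fun f hf => ?_
  rw [sum_log_ratio (fun i => ((cl D m i f).card : ℝ)) fun i => card_cl_pos D m hf]
  have : cl D m n f = {f} := by
    ext g
    rw [mem_cl, Finset.mem_singleton]
    constructor
    · rintro ⟨_, _, h3⟩
      funext j; exact h3 j j.2
    · rintro rfl
      exact ⟨hf, rfl, fun _ _ => rfl⟩
  rw [this]; simp

/-- `H(X^n Y^n | M₀) ≥ log |D| - log |M|` for a uniform word of `D`, multiplied by `|D|`. -/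
lemma log_card_le [Fintype M] (hD : D.Nonempty) :
    D.card * (Real.logb 2 D.card - Real.logb 2 (Fintype.card M)) ≤
      ∑ f ∈ D, Real.logb 2 (cl D m 0 f).card := by
  have hlog2 : 0 < Real.log 2 := Real.log_pos (by norm_num)
  have hDpos : (0 : ℝ) < D.card := by exact_mod_cast hD.card_pos
  have hM : (0 : ℝ) < Fintype.card M := by
    obtain ⟨f, _⟩ := hD
    exact_mod_cast Fintype.card_pos_iff.2 ⟨m f⟩
  have hterm : ∀ f ∈ D, Real.logb 2 D.card - Real.logb 2 (Fintype.card M) -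
      Real.logb 2 (cl D m 0 f).card ≤
      (D.card / Fintype.card M * (1 / (cl D m 0 f).card) - 1) / Real.log 2 := by
    intro f hf
    have hc := card_cl_pos D m (i := 0) hf
    refine le_trans (le_of_eq ?_) (logb_two_le (by positivity))
    rw [Real.logb_mul (by positivity) (by positivity), Real.logb_div hDpos.ne' hM.ne',
      Real.logb_div one_ne_zero hc.ne', Real.logb_one]
    ring
  -- the reciprocals of the class sizes add up to the number of classes
  have hclasses : ∑ f ∈ D, 1 / ((cl D m 0 f).card : ℝ) ≤ Fintype.card M := by
    rw [← Finset.sum_fiberwise D m, ← Finset.card_univ, ← nsmul_one]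
    refine Finset.sum_le_card_nsmul _ _ _ fun w _ => ?_
    have : ∀ f ∈ D.filter (fun f => m f = w), 1 / ((cl D m 0 f).card : ℝ) =
        1 / ((D.filter fun f => m f = w).card : ℝ) := by
      intro f hf
      congr 3
      ext g
      rw [mem_cl, Finset.mem_filter, (Finset.mem_filter.1 hf).2]
      simp
    rw [Finset.sum_congr rfl this, Finset.sum_const, nsmul_eq_mul, mul_one_div]
    exact div_self_le_one _
  have hsum := Finset.sum_le_sum hterm
  rw [← Finset.sum_div, Finset.sum_sub_distrib, Finset.sum_sub_distrib, Finset.sum_sub_distrib,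
    ← Finset.mul_sum,
    Finset.sum_const, Finset.sum_const, nsmul_eq_mul, nsmul_eq_mul, Finset.sum_const, nsmul_eq_mul, mul_one] at hsum
  have : (D.card / Fintype.card M * ∑ f ∈ D, 1 / ((cl D m 0 f).card : ℝ) - D.card) / Real.log 2
      ≤ 0 := by
    refine div_nonpos_of_nonpos_of_nonneg ?_ hlog2.le
    have := mul_le_mul_of_nonneg_left hclasses (div_pos hDpos hM).le
    rw [div_mul_cancel₀ _ hM.ne'] at this
    linarith
  linarith

/-- The private rate bound `∑ i, H(π(X_i Y_i) | W_i) ≤ log |N|` for a uniform word of `D`, multiplied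
by `|D|`. By Gibbs' inequality the law of the `i`-th letter is compared with the law of the `i`-th
decoded letter for a uniform private message among those consistent with the past; the logarithms
telescope to at most `log |N|`, since the true private message is always consistent. -/
lemma sum_ent_side {Z N : Type*} [Fintype Z] [Fintype N] (e : (Fin n → A) → N)
    (dec : M → N → Fin n → Z) (π : A → Z) (hdec : ∀ f ∈ D, ∀ i, dec (m f) (e f) i = π (f i)) :
    ∑ f ∈ D, ∑ i : Fin n, ent (law (cl D m i f) fun g => π (g i)) ≤
      D.card * Real.logb 2 (Fintype.card N) := by
  -- private messages whose decoded word is consistent with `f` before time `i`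
  let S : ℕ → (Fin n → A) → Finset N := fun i f =>
    univ.filter fun w => ∀ j : Fin n, (j : ℕ) < i → dec (m f) w j = π (f j)
  have hSmem : ∀ i, ∀ f ∈ D, e f ∈ S i f := by
    intro i f hf
    simp only [S, Finset.mem_filter, Finset.mem_univ, true_and]
    exact fun j _ => hdec f hf j
  have hSpos : ∀ i, ∀ f ∈ D, (0 : ℝ) < (S i f).card := by
    intro i f hf
    exact_mod_cast Finset.card_pos.2 ⟨_, hSmem i f hf⟩
  have hScl : ∀ i f g, g ∈ cl D m i f → S i g = S i f := by
    intro i f g hg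
    obtain ⟨_, h1, h2⟩ := (mem_cl D m).1 hg
    ext w
    simp only [S, Finset.mem_filter, Finset.mem_univ, true_and, h1]
    refine forall_congr' fun j => imp_congr_right fun hj => ?_
    rw [h2 j hj]
  have hlawS : ∀ (i : Fin n) (f : Fin n → A),
      law (S i f) (fun w => dec (m f) w i) (π (f i)) =
        ((S (i + 1) f).card : ℝ) / (S i f).card := by
    intro i f
    have : (S i f).filter (fun w => dec (m f) w i = π (f i)) = S (i + 1) f := by
      ext w
      simp only [S, Finset.mem_filter, Finset.mem_univ, true_and]
      constructor
      · rintro ⟨h3, h4⟩ j hj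
        rcases Nat.lt_succ_iff_lt_or_eq.1 hj with h | h
        · exact h3 j h
        · rw [Fin.ext h, h4]
      · intro h3
        exact ⟨fun j hj => h3 j (by omega), h3 i (by omega)⟩
    rw [law, this]
  have hlawS' : ∀ (i : Fin n) (f g : Fin n → A), g ∈ cl D m i f →
      law (S i f) (fun w => dec (m f) w i) (π (g i)) =
        ((S (i + 1) g).card : ℝ) / (S i g).card := by
    intro i f g hg
    rw [← hlawS, hScl i f g hg, ((mem_cl D m).1 hg).2.1]
  rw [Finset.sum_comm]
  have h : ∀ i : Fin n, ∑ f ∈ D, ent (law (cl D m i f) fun g => π (g i)) ≤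
      ∑ f ∈ D, - Real.logb 2 ((S (i + 1) f).card / (S i f).card : ℝ) := by
    intro i
    rw [← sum_cl_avg D m i fun g => - Real.logb 2 ((S (i + 1) g).card / (S i g).card : ℝ)]
    refine Finset.sum_le_sum fun f hf => ?_
    have hprob := isProb_law ⟨_, hSmem i f hf⟩ (fun w => dec (m f) w i)
    refine (ent_law_le _ _ (law (S i f) fun w => dec (m f) w i) hprob.1 hprob.2.le ?_).trans
      (le_of_eq ?_)
    · intro g hg
      have hgD := ((mem_cl D m).1 hg).1
      rw [hlawS' i f g hg]
      exact div_pos (hSpos _ g hgD) (hSpos _ g hgD)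
    · congr 1
      exact Finset.sum_congr rfl fun g hg => by rw [hlawS' i f g hg]
  refine (Finset.sum_le_sum fun i _ => h i).trans ?_
  rw [Finset.sum_comm, ← nsmul_eq_mul]
  refine Finset.sum_le_card_nsmul _ _ _ fun f hf => ?_
  rw [sum_log_ratio (fun i => ((S i f).card : ℝ)) fun i => hSpos i f hf]
  have h1 : (1 : ℝ) ≤ (S n f).card := by exact_mod_cast Finset.card_pos.2 ⟨_, hSmem n f hf⟩
  have h2 := Real.logb_nonneg (b := 2) (by norm_num) h1
  have h3 : (S 0 f).card = Fintype.card N := by simp [S]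
  rw [h3]; linarith

end

/-! ### The converse for a fixed type -/

/-- Lemma 6, perturbation converse for a fixed type: if a
Gray–Wyner code has correct probability at least `2^{-nα_n}` on the uniform
distribution over the type class of a joint type `P_{X̄Ȳ}`, then for any
`β_n > 0` there is a test channel `P_{W̄|X̄Ȳ}` on an alphabet of size at most
`|𝒳||𝒴|+2` with
`(1/n)log|ℳ0| ≥ I(W̄ ∧ X̄,Ȳ) − |𝒳||𝒴|log(n+1)/n − (α_n+β_n)`,
`(1/n)log|ℳ1| ≥ H(X̄|W̄) − 1/n − 2^{-nβ_n} log|𝒳|`, and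
`(1/n)log|ℳ2| ≥ H(Ȳ|W̄) − 1/n − 2^{-nβ_n} log|𝒴|`. -/
theorem fixed_type_converse
    {𝒳 𝒴 : Type*} [Fintype 𝒳] [Fintype 𝒴]
    {n M0 M1 M2 : ℕ} (hn : 0 < n)
    (p : 𝒳 × 𝒴 → ℝ) (hp : IsJointType n p)
    (C : GWCode 𝒳 𝒴 n M0 M1 M2)
    (α β : ℝ) (hα : 0 < α) (hβ : 0 < β)
    (hc : (2 : ℝ) ^ (-(n : ℝ) * α) ≤ PcGW C (unifType n p)) :
    ∃ k, k ≤ Fintype.card 𝒳 * Fintype.card 𝒴 + 2 ∧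
      ∃ V : 𝒳 × 𝒴 → Fin k → ℝ, IsChannel V ∧
        mutInfoW p V - (Fintype.card 𝒳 * Fintype.card 𝒴 : ℝ) * Real.logb 2 (n + 1) / n
            - (α + β) ≤ Real.logb 2 M0 / n ∧
        condEntX p V - 1 / n - (2 : ℝ) ^ (-(n : ℝ) * β) * Real.logb 2 (Fintype.card 𝒳)
          ≤ Real.logb 2 M1 / n ∧
        condEntY p V - 1 / n - (2 : ℝ) ^ (-(n : ℝ) * β) * Real.logb 2 (Fintype.card 𝒴)
          ≤ Real.logb 2 M2 / n := by
  have hn' : (0 : ℝ) < n := by exact_mod_cast hn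
  obtain ⟨hTne, hTcard⟩ := ent_le_log_card_typeClass hn p hp
  set T := univ.filter fun g : Fin n → 𝒳 × 𝒴 => ∀ a, empDist g a = p a with hT
  have hTpos : (0 : ℝ) < T.card := by exact_mod_cast hTne.card_pos
  set D := T.filter fun f => C.correct f with hDdef
  -- the correct probability is the proportion of correctly decoded words in the type class
  have hPc : PcGW C (unifType n p) = D.card / T.card := by
    have hu : ∀ s : Finset (Fin n → 𝒳 × 𝒴), ∑ f ∈ s, unifType n p f = (s.filter (· ∈ T)).card / T.card := by
      intro s
      have : ∀ f, unifType n p f = if f ∈ T then (1 : ℝ) / T.card else 0 := by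
        intro f
        simp [unifType, hT]
      simp only [this]
      rw [← Finset.sum_filter, Finset.sum_const, nsmul_eq_mul, mul_one_div]
    have hsplit : D.card + (T.filter fun f => ¬ C.correct f).card = T.card :=
      Finset.card_filter_add_card_filter_not _
    have hset : (univ.filter fun f => ¬ C.correct f).filter (· ∈ T) =
        T.filter fun f => ¬ C.correct f := by
      ext f; simp [and_comm]
    rw [PcGW, PeGW, hu, hset, eq_div_iff hTpos.ne', sub_mul, div_mul_cancel₀ _ hTpos.ne', one_mul,
      ← hsplit]
    push_cast; ring
  rw [hPc, le_div_iff₀ hTpos] at hc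
  have hDpos : (0 : ℝ) < D.card := lt_of_lt_of_le (by positivity) hc
  have hDne : D.Nonempty := Finset.card_pos.1 (by exact_mod_cast hDpos)
  have hDlog : -(n : ℝ) * α + Real.logb 2 T.card ≤ Real.logb 2 D.card := by
    have := Real.logb_le_logb_of_le (b := 2) (by norm_num) (by positivity) hc
    rwa [Real.logb_mul (by positivity) hTpos.ne', Real.logb_rpow (by norm_num) (by norm_num)] at this
  have hDT : ∀ f ∈ D, ∀ a, empDist f a = p a := fun f hf => by
    simpa [hT] using (Finset.mem_filter.1 hf).1
  have hDc : ∀ f ∈ D, C.correct f := fun f hf => (Finset.mem_filter.1 hf).2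
  -- the auxiliary variable: a uniform time index together with a uniform word of `D`
  let lam : Fin n × D → ℝ := fun _ => 1 / (n * D.card)
  let q : Fin n × D → 𝒳 × 𝒴 → ℝ := fun w => law (cl D C.enc0 w.1 w.2) fun g => g w.1
  have hsum : ∀ u : Fin n → (Fin n → 𝒳 × 𝒴) → ℝ,
      ∑ w : Fin n × D, lam w * u w.1 w.2 = (∑ f ∈ D, ∑ i, u i f) / (n * D.card) := by
    intro u
    rw [Fintype.sum_prod_type_right, ← Finset.sum_coe_sort D, Finset.sum_div]
    simp only [lam, Finset.sum_div]
    refine Finset.sum_congr rfl fun f _ => Finset.sum_congr rfl fun i _ => ?_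
    ring
  have hp0 : ∀ a, 0 ≤ p a := by
    obtain ⟨f, hf⟩ := hp
    intro a; rw [hf]; unfold empDist; positivity
  have hlam : IsProb lam := by
    refine ⟨fun _ => by positivity, ?_⟩
    have := hsum fun _ _ => 1
    simp only [mul_one] at this
    rw [this]
    simp only [Finset.sum_const, Finset.card_univ, Fintype.card_fin, nsmul_eq_mul, mul_one]
    field_simp
  have hq : ∀ w, IsProb (q w) := fun w => isProb_law ⟨_, self_mem_cl D C.enc0 w.2.2⟩ _
  -- every word of `D` has type `p`, so averaging the letters over time and over `D` gives `p`
  have hmix : ∀ a, ∑ w, lam w * q w a = p a := by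
    intro a
    rw [hsum fun i f => law (cl D C.enc0 i f) (fun g => g i) a, Finset.sum_comm]
    have h1 : ∀ i : Fin n, ∑ f ∈ D, law (cl D C.enc0 i f) (fun g => g i) a =
        ∑ f ∈ D, if f i = a then 1 else 0 := by
      intro i
      rw [← sum_cl_avg D C.enc0 i fun f => if f i = a then 1 else 0]
      refine Finset.sum_congr rfl fun f _ => ?_
      rw [law, Finset.sum_boole]; congr!
    simp only [h1]
    rw [Finset.sum_comm]
    have h2 : ∀ f ∈ D, (∑ i : Fin n, if f i = a then (1 : ℝ) else 0) = n * p a := by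
      intro f hf
      rw [← hDT f hf a, empDist]
      simp; field_simp; congr!
    rw [Finset.sum_congr rfl h2, Finset.sum_const, nsmul_eq_mul]
    field_simp
  obtain ⟨k, hk, V, hV, hI, hX, hY⟩ := exists_channel_small p hp0 lam hlam q hq hmix
  have hqX : ∀ w, (fun x => ∑ y, q w (x, y)) = law (cl D C.enc0 w.1 w.2) fun g => (g w.1).1 := by
    intro w; funext x
    rw [← law_comp _ _ Prod.fst, Finset.sum_filter, Fintype.sum_prod_type_right]
    simp [q]
  have hqY : ∀ w, (fun y => ∑ x, q w (x, y)) = law (cl D C.enc0 w.1 w.2) fun g => (g w.1).2 := by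
    intro w; funext y
    rw [← law_comp _ _ Prod.snd, Finset.sum_filter, Fintype.sum_prod_type]
    simp [q]
  have hent := (log_card_le D C.enc0 hDne).trans_eq (sum_ent_pair D C.enc0).symm
  have hsX := sum_ent_side D C.enc0 C.enc1 (fun a b => C.dec1 (a, b)) Prod.fst
    fun f hf i => (hDc f hf i).1
  have hsY := sum_ent_side D C.enc0 C.enc2 (fun a b => C.dec2 (a, b)) Prod.snd
    fun f hf i => (hDc f hf i).2
  simp only [hqX] at hX
  simp only [hqY] at hY
  rw [hsum fun i f => ent (law (cl D C.enc0 i f) fun g => g i)] at hI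
  rw [hsum fun i f => ent (law (cl D C.enc0 i f) fun g => (g i).1)] at hX
  rw [hsum fun i f => ent (law (cl D C.enc0 i f) fun g => (g i).2)] at hY
  simp only [Fintype.card_fin] at hent hsX hsY
  -- the slack terms of the two private-rate bounds are nonnegative
  have hslack : ∀ c : ℕ, 0 ≤ 1 / (n : ℝ) + (2 : ℝ) ^ (-(n : ℝ) * β) * Real.logb 2 c := by
    intro c
    have : 0 ≤ Real.logb 2 (c : ℝ) := by
      rcases Nat.eq_zero_or_pos c with rfl | h
      · simp
      · exact Real.logb_nonneg (by norm_num) (by exact_mod_cast h)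
    positivity
  refine ⟨k, hk, V, hV, ?_, ?_, ?_⟩
  · have h1 : (Real.logb 2 D.card - Real.logb 2 M0) / n ≤
        (∑ f ∈ D, ∑ i : Fin n, ent (law (cl D C.enc0 i f) fun g => g i)) / (n * D.card) := by
      rw [div_le_div_iff₀ hn' (by positivity)]
      calc _ = D.card * (Real.logb 2 D.card - Real.logb 2 M0) * n := by ring
        _ ≤ _ := mul_le_mul_of_nonneg_right hent hn'.le
    rw [Fintype.card_prod] at hTcard
    push_cast at hTcard
    have h2 : ent p - (Fintype.card 𝒳 * Fintype.card 𝒴 : ℝ) * Real.logb 2 (n + 1) / n - α ≤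
        Real.logb 2 D.card / n := by
      rw [le_div_iff₀ hn', sub_mul, sub_mul, div_mul_cancel₀ _ hn'.ne']
      linarith
    rw [sub_div] at h1
    linarith
  · have h1 : condEntX p V ≤ Real.logb 2 M1 / n := by
      rw [hX, div_le_div_iff₀ (by positivity) hn']
      calc _ ≤ D.card * Real.logb 2 M1 * n := mul_le_mul_of_nonneg_right hsX hn'.le
        _ = _ := by ring
    have := hslack (Fintype.card 𝒳)
    linarith
  · have h1 : condEntY p V ≤ Real.logb 2 M2 / n := by
      rw [hY, div_le_div_iff₀ (by positivity) hn']
      calc _ ≤ D.card * Real.logb 2 M2 * n := mul_le_mul_of_nonneg_right hsY hn'.le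
        _ = _ := by ring
    have := hslack (Fintype.card 𝒴)
    linarith
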